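/- arXiv:2511.22624 — 4 statements merged into one kernel-verified Lean document; each statement's English description precedes it below -/
import Mathlib

section
/- Let A_P, A_V, B_V, A_I, n, p, T, R, m, b, b′ be real numbers with A_P, A_V, B_V, A_I, n ≥ 0, p > 0, T ≥ 0, 0 ≤ b′ ≤ 2/3, A_P·n·p ≤ 1/2 and m·p ≤ 1/2. Assume: (i) 2^{−R} · (A_P·n·p/3 + 2/3) ≤ 2·A_V·n·p; (ii) T · (18·(4·A_V·n + 2·B_V)·p + 3·A_I·n·p) ≤ 2; and (iii) b ≤ T · ( ((A_P·n·p·(1−b′) + b′)·2^{−R} + 2·(A_V·n + B_V)·p) / ((1−m·p)·(1−b′)) + A_I·n·p ). Then b ≤ 2/3. -/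
/-- One-level inductive step of the uniformly bounded recursive CliNR error
analysis: if the error bound `b'` at the lower level is at most `2/3`, then the
error bound `b` at the level above is also at most `2/3`. -/
theorem bounded_error_step (A_P A_V B_V A_I n p T R m b b' : ℝ)
    (hAP : 0 ≤ A_P) (hAV : 0 ≤ A_V) (hBV : 0 ≤ B_V) (hAI : 0 ≤ A_I) (hn : 0 ≤ n)
    (hp : 0 < p) (hT : 0 ≤ T) (hb'0 : 0 ≤ b') (hb' : b' ≤ 2 / 3)
    (hAPnp : A_P * n * p ≤ 1 / 2) (hmp : m * p ≤ 1 / 2)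
    (hR : (2 : ℝ) ^ (-R) * (A_P * n * p / 3 + 2 / 3) ≤ 2 * A_V * n * p)
    (hT2 : T * (18 * (4 * A_V * n + 2 * B_V) * p + 3 * A_I * n * p) ≤ 2)
    (hb : b ≤ T * (((A_P * n * p * (1 - b') + b') * (2 : ℝ) ^ (-R)
          + 2 * (A_V * n + B_V) * p) / ((1 - m * p) * (1 - b')) + A_I * n * p)) :
    b ≤ 2 / 3 := by
  have hq : (0 : ℝ) < (2 : ℝ) ^ (-R) := Real.rpow_pos_of_pos (by norm_num) _
  generalize (2 : ℝ) ^ (-R) = q at *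
  have h1 : A_P * n * p * (1 - b') + b' ≤ A_P * n * p / 3 + 2 / 3 := by
    nlinarith [mul_nonneg (sub_nonneg.2 hb') (by linarith : 0 ≤ 1 - A_P * n * p)]
  have h2 := mul_le_mul_of_nonneg_right h1 hq.le
  have hX : 0 ≤ (4 * A_V * n + 2 * B_V) * p := by positivity
  have hD : 1 / 6 ≤ (1 - m * p) * (1 - b') := by
    nlinarith [mul_nonneg (by linarith : 0 ≤ 1 - m * p - 1 / 2) (by linarith : 0 ≤ 1 - b' - 1 / 3)]
  have h3 : ((A_P * n * p * (1 - b') + b') * q + 2 * (A_V * n + B_V) * p)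
      / ((1 - m * p) * (1 - b')) ≤ 6 * ((4 * A_V * n + 2 * B_V) * p) := by
    rw [div_le_iff₀ (by linarith)]
    have h4 := mul_le_mul_of_nonneg_left hD hX
    linarith
  have h5 := mul_le_mul_of_nonneg_left (add_le_add_left h3 (A_I * n * p)) hT
  linarith
end

section
/- Let A_P, A_V, B_V, A_I, n, p, T, R, m be real numbers with A_P, A_V, B_V, A_I, n ≥ 0, p > 0, T ≥ 0, A_P·n·p ≤ 1/2 and m·p ≤ 1/2, satisfying 2^{−R} · (A_P·n·p/3 + 2/3) ≤ 2·A_V·n·p and T · (18·(4·A_V·n + 2·B_V)·p + 3·A_I·n·p) ≤ 2. Let D ≥ 1 be a natural number and let b : ℕ → ℝ be a sequence with 0 ≤ b(ℓ) for all ℓ ∈ {1,…,D}, with b(D) ≤ 2/3, and such that for every ℓ with 1 ≤ ℓ ≤ D−1 one has b(ℓ) ≤ T · ( ((A_P·n·p·(1−b(ℓ+1)) + b(ℓ+1))·2^{−R} + 2·(A_V·n + B_V)·p) / ((1−m·p)·(1−b(ℓ+1))) + A_I·n·p ). Then b(ℓ) ≤ 2/3 for every ℓ ∈ {1,…,D}.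 -/
/-- Level-by-level invariant for the uniformly bounded recursive CliNR
implementation: the subtree error bound `b ℓ` stays at most `2/3` at every
level `ℓ ∈ {1, …, D}` of the CliNR tree. -/
theorem bounded_error_levels (A_P A_V B_V A_I n p T R m : ℝ)
    (hAP : 0 ≤ A_P) (hAV : 0 ≤ A_V) (hBV : 0 ≤ B_V) (hAI : 0 ≤ A_I) (hn : 0 ≤ n)
    (hp : 0 < p) (hT : 0 ≤ T)
    (hAPnp : A_P * n * p ≤ 1 / 2) (hmp : m * p ≤ 1 / 2)
    (hR : (2 : ℝ) ^ (-R) * (A_P * n * p / 3 + 2 / 3) ≤ 2 * A_V * n * p)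
    (hT2 : T * (18 * (4 * A_V * n + 2 * B_V) * p + 3 * A_I * n * p) ≤ 2)
    (D : ℕ) (hD : 1 ≤ D) (b : ℕ → ℝ)
    (hb0 : ∀ ℓ, 1 ≤ ℓ → ℓ ≤ D → 0 ≤ b ℓ)
    (hbD : b D ≤ 2 / 3)
    (hrec : ∀ ℓ, 1 ≤ ℓ → ℓ ≤ D - 1 →
      b ℓ ≤ T * (((A_P * n * p * (1 - b (ℓ + 1)) + b (ℓ + 1)) * (2 : ℝ) ^ (-R)
          + 2 * (A_V * n + B_V) * p) / ((1 - m * p) * (1 - b (ℓ + 1)))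
          + A_I * n * p)) :
    ∀ ℓ, 1 ≤ ℓ → ℓ ≤ D → b ℓ ≤ 2 / 3 := by
  intro ℓ h1 h2
  induction h2 using Nat.decreasingInduction with
  | self => exact hbD
  | of_succ k hk ih =>
    have hx := ih (by omega)
    have hx0 := hb0 (k + 1) (by omega) (by omega)
    have hr := hrec k h1 (by omega)
    generalize b (k + 1) = x at hx hx0 hr
    have hq : 0 < (2 : ℝ) ^ (-R) := Real.rpow_pos_of_pos (by norm_num) _
    generalize (2 : ℝ) ^ (-R) = q at hq hr hR
    have ha : 0 ≤ A_P * n * p := by positivity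
    generalize A_P * n * p = a at *
    have h3 : (a * (1 - x) + x) * q ≤ q * (a / 3 + 2 / 3) := by
      rw [mul_comm]
      apply mul_le_mul_of_nonneg_left _ hq.le
      nlinarith
    have hden : 1 / 6 ≤ (1 - m * p) * (1 - x) := by nlinarith
    have hN : 0 ≤ (4 * A_V * n + 2 * B_V) * p := by positivity
    have h4 : ((a * (1 - x) + x) * q + 2 * (A_V * n + B_V) * p) / ((1 - m * p) * (1 - x))
        ≤ 6 * ((4 * A_V * n + 2 * B_V) * p) := by
      rw [div_le_iff₀ (by linarith)]
      nlinarith [mul_le_mul_of_nonneg_left hden hN]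
    have h5 := mul_le_mul_of_nonneg_left (add_le_add_left h4 (A_I * n * p)) hT
    linarith
end

section
/- Let A_P, A_V, B_V, A_I, n, p, T, R, m, b₁, t₁, P be real numbers with A_P, A_V, B_V, A_I, n ≥ 0, p > 0, T > 0, t₁ ≥ 0, 0 ≤ b₁ ≤ 2/3, A_P·n·p ≤ 1/2 and m·p ≤ 1/2. Assume: (i) 2^{−R} · (A_P·n·p/3 + 2/3) ≤ 2·A_V·n·p; (ii) T · (18·(4·A_V·n + 2·B_V)·p + 3·A_I·n·p) ≤ 2; and (iii) P ≤ t₁ · ( ((A_P·n·p·(1−b₁) + b₁)·2^{−R} + 2·(A_V·n + B_V)·p) / ((1−m·p)·(1−b₁)) + A_I·n·p ). Then P ≤ (2/3)·(t₁/T). -/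
/-- Final step of the logical-error bound for the uniformly bounded recursive
CliNR implementation: the logical error rate `P` of the whole implementation is
at most `(2/3) * (t₁ / T)`. -/
theorem bounded_error_top (A_P A_V B_V A_I n p T R m b₁ t₁ P : ℝ)
    (hAP : 0 ≤ A_P) (hAV : 0 ≤ A_V) (hBV : 0 ≤ B_V) (hAI : 0 ≤ A_I) (hn : 0 ≤ n)
    (hp : 0 < p) (hT : 0 < T) (ht₁ : 0 ≤ t₁) (hb₁0 : 0 ≤ b₁) (hb₁ : b₁ ≤ 2 / 3)
    (hAPnp : A_P * n * p ≤ 1 / 2) (hmp : m * p ≤ 1 / 2)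
    (hR : (2 : ℝ) ^ (-R) * (A_P * n * p / 3 + 2 / 3) ≤ 2 * A_V * n * p)
    (hT2 : T * (18 * (4 * A_V * n + 2 * B_V) * p + 3 * A_I * n * p) ≤ 2)
    (hP : P ≤ t₁ * (((A_P * n * p * (1 - b₁) + b₁) * (2 : ℝ) ^ (-R)
          + 2 * (A_V * n + B_V) * p) / ((1 - m * p) * (1 - b₁)) + A_I * n * p)) :
    P ≤ 2 / 3 * (t₁ / T) := by
  have hr : 0 < (2 : ℝ) ^ (-R) := Real.rpow_pos_of_pos (by norm_num) _
  generalize (2 : ℝ) ^ (-R) = r at *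
  have h1 : A_P * n * p * (1 - b₁) + b₁ ≤ A_P * n * p / 3 + 2 / 3 := by
    nlinarith [mul_nonneg (sub_nonneg.2 hAPnp) (sub_nonneg.2 hb₁)]
  have h2 : (A_P * n * p * (1 - b₁) + b₁) * r ≤ 2 * A_V * n * p := by
    nlinarith [mul_le_mul_of_nonneg_right h1 hr.le]
  have hN : 0 ≤ (4 * A_V * n + 2 * B_V) * p := by positivity
  have hden : 1 / 6 ≤ (1 - m * p) * (1 - b₁) := by
    nlinarith [mul_nonneg (sub_nonneg.2 hmp) (sub_nonneg.2 hb₁)]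
  have h3 : ((A_P * n * p * (1 - b₁) + b₁) * r
      + 2 * (A_V * n + B_V) * p) / ((1 - m * p) * (1 - b₁))
      ≤ 6 * ((4 * A_V * n + 2 * B_V) * p) := by
    rw [div_le_iff₀ (by linarith)]
    have := mul_le_mul_of_nonneg_left hden hN
    linarith
  have h4 : 6 * ((4 * A_V * n + 2 * B_V) * p) + A_I * n * p ≤ 2 / 3 / T := by
    rw [le_div_iff₀ hT]
    linarith
  calc P ≤ _ := hP
    _ ≤ t₁ * (2 / 3 / T) := mul_le_mul_of_nonneg_left (by linarith) ht₁
    _ = 2 / 3 * (t₁ / T) := by ring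
end

section
/- Let p, m, c, t be real numbers with p > 0, m ≥ 0, c ≥ 0, t ≥ 0, m·p ≤ 1/2 and m + c ≤ 1/(2p). Let D ≥ 1 be a natural number, let b : ℕ → ℝ satisfy 0 ≤ b(ℓ) ≤ 2/3 for all ℓ ∈ {1,…,D}, and let s : ℕ → ℝ satisfy s(ℓ) ≥ 1/(2p) for all ℓ ∈ {1,…,D}, s(D) ≤ 2/(3p), and s(ℓ) ≤ t · ( (m + s(ℓ+1)) / ((1−m·p)·(1−b(ℓ+1))) + c ) for every ℓ with 1 ≤ ℓ ≤ D−1. Then s(1) ≤ (12·t)^{D−1} · (2/(3p)). -/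
/-- Telescoped gate-overhead bound for the uniformly bounded recursive CliNR
implementation of depth `D`: `s 1 ≤ (12 t) ^ (D - 1) * (2 / (3 p))`. -/
theorem gate_overhead_telescoped (p m c t : ℝ)
    (hp : 0 < p) (hm : 0 ≤ m) (hc : 0 ≤ c) (ht : 0 ≤ t)
    (hmp : m * p ≤ 1 / 2) (hmc : m + c ≤ 1 / (2 * p))
    (D : ℕ) (hD : 1 ≤ D) (b : ℕ → ℝ)
    (hb : ∀ ℓ, 1 ≤ ℓ → ℓ ≤ D → 0 ≤ b ℓ ∧ b ℓ ≤ 2 / 3)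
    (s : ℕ → ℝ)
    (hslb : ∀ ℓ, 1 ≤ ℓ → ℓ ≤ D → 1 / (2 * p) ≤ s ℓ)
    (hsD : s D ≤ 2 / (3 * p))
    (hrec : ∀ ℓ, 1 ≤ ℓ → ℓ ≤ D - 1 →
      s ℓ ≤ t * ((m + s (ℓ + 1)) / ((1 - m * p) * (1 - b (ℓ + 1))) + c)) :
    s 1 ≤ (12 * t) ^ (D - 1) * (2 / (3 * p)) := by
  have key : ∀ ℓ, 1 ≤ ℓ → ℓ ≤ D - 1 → s ℓ ≤ (12 * t) * s (ℓ + 1) := by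
    intro ℓ h1 h2
    obtain ⟨hb0, hb1⟩ := hb (ℓ + 1) (by omega) (by omega)
    have hs := hslb (ℓ + 1) (by omega) (by omega)
    have hpos : 0 < 1 / (2 * p) := by positivity
    have hden : 1 / 6 ≤ (1 - m * p) * (1 - b (ℓ + 1)) := by nlinarith
    have hdiv : (m + s (ℓ + 1)) / ((1 - m * p) * (1 - b (ℓ + 1))) ≤ 6 * (m + s (ℓ + 1)) := by
      rw [div_le_iff₀ (by linarith)]
      nlinarith
    calc s ℓ ≤ _ := hrec ℓ h1 h2
      _ ≤ t * (12 * s (ℓ + 1)) := mul_le_mul_of_nonneg_left (by linarith) ht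
      _ = _ := by ring
  have main : ∀ k, k ≤ D - 1 → s (D - k) ≤ (12 * t) ^ k * (2 / (3 * p)) := by
    intro k
    induction k with
    | zero => intro _; simpa using hsD
    | succ k ih =>
      intro hk
      have h := key (D - (k + 1)) (by omega) (by omega)
      rw [show D - (k + 1) + 1 = D - k by omega] at h
      calc s (D - (k + 1)) ≤ _ := h
        _ ≤ (12 * t) * ((12 * t) ^ k * (2 / (3 * p))) :=
          mul_le_mul_of_nonneg_left (ih (by omega)) (by linarith)
        _ = _ := by ring
  have h := main (D - 1) le_rfl
  rwa [show D - (D - 1) = 1 by omega] at h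
end
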